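/- arXiv:2201.12498 — 2 statements merged into one kernel-verified Lean document; each statement's English description precedes it below -/
import Mathlib

section
/- Let δ' ≥ 0 and let A ∈ ℝ^{n×n} be a symmetric matrix with all entries positive whose largest eigenvalue equals 1 and such that A_{sj}/A_{tj} ≤ 1+δ' for all indices s, t, j. List the eigenvalues of A in decreasing order λ₁ ≥ λ₂ ≥ … ≥ λₙ. Then for every i ≥ 2, |λᵢ| ≤ sqrt( (1 + (n−1)(1+δ')²)(1+δ')² / n − 1 ). -/
open Matrix Finset

/-!
Write `r = 1 + δ'` and let `ρ` be the largest eigenvalue. By symmetry the ratio condition on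
columns also holds on rows, so any two entries of `A` are within a factor `r²` of each other. This
gives a reverse Cauchy-Schwarz inequality `n² ∑ A s j ^ 2 ≤ r² (∑ A s j)²`. The sum of the entries
is the quadratic form of `A` at the all-ones vector, hence at most `n ρ`, while the sum of their
squares is the sum of the squared eigenvalues. Therefore `ρ² + λᵢ² ≤ r² ρ²`, that is
`|λᵢ| ≤ ρ √(r² - 1)`, which is sharper than the required bound because `n ≤ 1 + (n - 1) r²`.
-/

section OrthogonalDiagonalization

variable {m n R : Type*} [Fintype m] [Fintype n] [DecidableEq n]

theorem sum_sq_entries_mul_diagonal_mul_transpose [CommSemiring R] {U : Matrix m n R}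
    (hU : Uᵀ * U = 1) (μ : n → R) :
    ∑ s, ∑ t, (U * diagonal μ * Uᵀ) s t ^ 2 = ∑ k, μ k ^ 2 := by
  set A := U * diagonal μ * Uᵀ with hA
  have mul_transpose_self : A * Aᵀ = U * (diagonal μ * diagonal μ * Uᵀ) := by
    calc A * Aᵀ = U * diagonal μ * (Uᵀ * U) * diagonal μ * Uᵀ := by
          simp only [hA, transpose_mul, diagonal_transpose, transpose_transpose, Matrix.mul_assoc]
      _ = U * (diagonal μ * diagonal μ * Uᵀ) := by
          simp only [hU, Matrix.mul_one, Matrix.mul_assoc]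
  calc ∑ s, ∑ t, A s t ^ 2 = (A * Aᵀ).trace := by simp [trace, mul_apply, sq]
    _ = (diagonal μ * diagonal μ * (Uᵀ * U)).trace := by
      rw [mul_transpose_self, trace_mul_comm, Matrix.mul_assoc]
    _ = ∑ k, μ k ^ 2 := by simp [hU, trace_diagonal, sq]

theorem dotProduct_mul_diagonal_mul_transpose_mulVec [CommSemiring R] (U : Matrix m n R)
    (μ : n → R) (x : m → R) :
    x ⬝ᵥ (U * diagonal μ * Uᵀ) *ᵥ x = ∑ k, μ k * (Uᵀ *ᵥ x) k ^ 2 := by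
  rw [← mulVec_mulVec, ← mulVec_mulVec, dotProduct_mulVec, ← mulVec_transpose]
  simp only [dotProduct, mulVec_diagonal]
  exact sum_congr rfl fun k _ ↦ by ring

variable [CommRing R] [LinearOrder R] [IsStrictOrderedRing R] [DecidableEq m]

theorem dotProduct_mul_diagonal_mul_transpose_mulVec_le {U : Matrix m n R} (hU : U * Uᵀ = 1)
    {μ : n → R} {c : R} (hμ : ∀ k, μ k ≤ c) (x : m → R) :
    x ⬝ᵥ (U * diagonal μ * Uᵀ) *ᵥ x ≤ c * (x ⬝ᵥ x) := by
  have dotProduct_self_eq : ∑ k, (Uᵀ *ᵥ x) k ^ 2 = x ⬝ᵥ x := by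
    simpa [hU] using (dotProduct_mul_diagonal_mul_transpose_mulVec U 1 x).symm
  rw [dotProduct_mul_diagonal_mul_transpose_mulVec, ← dotProduct_self_eq, mul_sum]
  gcongr with k
  exact hμ k

theorem sum_entries_mul_diagonal_mul_transpose_le {U : Matrix m n R} (hU : U * Uᵀ = 1)
    {μ : n → R} {c : R} (hμ : ∀ k, μ k ≤ c) :
    ∑ s, ∑ t, (U * diagonal μ * Uᵀ) s t ≤ c * Fintype.card m := by
  simpa [dotProduct, mulVec] using dotProduct_mul_diagonal_mul_transpose_mulVec_le hU hμ 1

end OrthogonalDiagonalization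

section ComparableEntries

variable {ι R : Type*} [CommRing R] [LinearOrder R] [IsStrictOrderedRing R]

theorem card_mul_sum_sq_le_mul_sq_sum {s : Finset ι} {f : ι → R} {K : R}
    (hf : ∀ i ∈ s, 0 ≤ f i) (hK : ∀ i ∈ s, ∀ j ∈ s, f i ≤ K * f j) :
    #s * ∑ i ∈ s, f i ^ 2 ≤ K * (∑ i ∈ s, f i) ^ 2 := by
  have card_mul_le : ∀ i ∈ s, #s * f i ≤ K * ∑ j ∈ s, f j := fun i hi ↦ by
    simpa [mul_sum] using sum_le_sum (hK i hi)
  calc #s * ∑ i ∈ s, f i ^ 2 = ∑ i ∈ s, #s * f i * f i := by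
        simp only [mul_sum, sq, mul_assoc]
    _ ≤ ∑ i ∈ s, (K * ∑ j ∈ s, f j) * f i :=
        sum_le_sum fun i hi ↦ mul_le_mul_of_nonneg_right (card_mul_le i hi) (hf i hi)
    _ = K * (∑ i ∈ s, f i) ^ 2 := by rw [← mul_sum]; ring

theorem entry_le_sq_mul_entry {A : Matrix ι ι R} (hA : A.IsSymm) {r : R} (hr : 0 ≤ r)
    (hcol : ∀ s t j, A s j ≤ r * A t j) (s j t k : ι) : A s j ≤ r ^ 2 * A t k := by
  calc A s j ≤ r * A t j := hcol s t j
    _ = r * A j t := by rw [hA.apply]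
    _ ≤ r * (r * A k t) := by gcongr; exact hcol j k t
    _ = r ^ 2 * A t k := by rw [hA.apply]; ring

theorem card_sq_mul_sum_sq_entries_le [Fintype ι] {A : Matrix ι ι R} (hA : A.IsSymm)
    (hnonneg : ∀ s t, 0 ≤ A s t) {r : R} (hr : 0 ≤ r) (hcol : ∀ s t j, A s j ≤ r * A t j) :
    (Fintype.card ι : R) ^ 2 * ∑ s, ∑ t, A s t ^ 2 ≤ r ^ 2 * (∑ s, ∑ t, A s t) ^ 2 := by
  have h := card_mul_sum_sq_le_mul_sq_sum (s := univ) (f := fun p : ι × ι ↦ A p.1 p.2)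
    (fun p _ ↦ hnonneg p.1 p.2)
    (fun p _ q _ ↦ entry_le_sq_mul_entry hA hr hcol p.1 p.2 q.1 q.2)
  simpa [Fintype.sum_prod_type, sq] using h

end ComparableEntries

theorem le_one_add_sub_one_mul_mul_div {K : Type*} [Field K] [LinearOrder K]
    [IsStrictOrderedRing K] {x y : K} (hx : 1 ≤ x) (hy : 1 ≤ y) :
    y ≤ (1 + (x - 1) * y) * y / x := by
  rw [le_div_iff₀ (by linarith), mul_comm]
  gcongr
  nlinarith

theorem nonleading_eigenvalue_bound_general {ι : Type*} [Fintype ι] [DecidableEq ι]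
    {A : Matrix ι ι ℝ} (hnonneg : ∀ s t, 0 ≤ A s t)
    {r : ℝ} (hr : 0 ≤ r) (hcol : ∀ s t j, A s j ≤ r * A t j)
    {μ : ι → ℝ} {U : Matrix ι ι ℝ} (hU : U * Uᵀ = 1) (hdecomp : A = U * diagonal μ * Uᵀ)
    {top : ι} (htop : ∀ k, μ k ≤ μ top) {i : ι} (hi : i ≠ top) :
    |μ i| ≤ √(r ^ 2 - 1) * μ top := by
  have card_pos : (0 : ℝ) < Fintype.card ι := by exact_mod_cast Fintype.card_pos_iff.mpr ⟨i⟩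
  have hsymm : A.IsSymm := by simp [hdecomp, IsSymm, Matrix.mul_assoc]
  have sum_entries_nonneg : 0 ≤ ∑ s, ∑ t, A s t :=
    sum_nonneg fun s _ ↦ sum_nonneg fun t _ ↦ hnonneg s t
  have sum_entries_le : ∑ s, ∑ t, A s t ≤ μ top * Fintype.card ι := by
    rw [hdecomp]; exact sum_entries_mul_diagonal_mul_transpose_le hU htop
  have top_nonneg : 0 ≤ μ top :=
    nonneg_of_mul_nonneg_left (sum_entries_nonneg.trans sum_entries_le) card_pos
  have sum_sq_entries_eq : ∑ s, ∑ t, A s t ^ 2 = ∑ k, μ k ^ 2 := by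
    rw [hdecomp]; exact sum_sq_entries_mul_diagonal_mul_transpose (mul_eq_one_comm.mp hU) μ
  have sum_sq_le : ∑ k, μ k ^ 2 ≤ r ^ 2 * μ top ^ 2 := by
    refine le_of_mul_le_mul_left ?_ (pow_pos card_pos 2)
    calc (Fintype.card ι : ℝ) ^ 2 * ∑ k, μ k ^ 2 ≤ r ^ 2 * (∑ s, ∑ t, A s t) ^ 2 :=
          sum_sq_entries_eq ▸ card_sq_mul_sum_sq_entries_le hsymm hnonneg hr hcol
      _ ≤ r ^ 2 * (μ top * Fintype.card ι) ^ 2 := by gcongr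
      _ = (Fintype.card ι : ℝ) ^ 2 * (r ^ 2 * μ top ^ 2) := by ring
  have pair_le : μ i ^ 2 + μ top ^ 2 ≤ ∑ k, μ k ^ 2 :=
    add_le_sum (fun k _ ↦ sq_nonneg (μ k)) (mem_univ i) (mem_univ top) hi
  calc |μ i| ≤ √((r ^ 2 - 1) * μ top ^ 2) := Real.abs_le_sqrt (by linarith)
    _ = √(r ^ 2 - 1) * μ top := by
      rw [Real.sqrt_mul' _ (sq_nonneg _), Real.sqrt_sq top_nonneg]

/-- exact form of the paper's Corollary A.5.  Let `A` be a symmetric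
matrix with all entries positive, largest eigenvalue equal to `1`, and same-column entry
ratios at most `1 + δ'`.  Listing the eigenvalues of `A` in decreasing order
`λ₁ ≥ λ₂ ≥ … ≥ λₙ` (via a spectral decomposition), every non-leading eigenvalue
satisfies `|λᵢ| ≤ sqrt((1 + (n-1)(1+δ')²)(1+δ')²/n − 1)` for `i ≥ 2`. -/
theorem nonleading_eigenvalue_bound {n : ℕ} (hn : 0 < n) (δ' : ℝ) (hδ' : 0 ≤ δ')
    (A : Matrix (Fin n) (Fin n) ℝ)
    (hsym : A.IsSymm)
    (hpos : ∀ i j, 0 < A i j)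
    (hratio : ∀ s t j, A s j / A t j ≤ 1 + δ')
    (μ : Fin n → ℝ) (hmono : Antitone μ)
    (U : Matrix (Fin n) (Fin n) ℝ) (hU : U * Uᵀ = 1)
    (hdecomp : A = U * Matrix.diagonal μ * Uᵀ)
    (htop : μ ⟨0, hn⟩ = 1) :
    ∀ i : Fin n, 1 ≤ (i : ℕ) →
      |μ i| ≤ Real.sqrt ((1 + ((n : ℝ) - 1) * (1 + δ') ^ 2) * (1 + δ') ^ 2 / n - 1) := by
  intro i hi
  have bound : |μ i| ≤ √((1 + δ') ^ 2 - 1) * μ ⟨0, hn⟩ :=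
    nonleading_eigenvalue_bound_general (fun s t ↦ (hpos s t).le) (by positivity)
      (fun s t j ↦ (div_le_iff₀ (hpos t j)).mp (hratio s t j)) hU hdecomp
      (fun k ↦ hmono (Fin.mk_le_of_le_val k.val.zero_le)) (Fin.ne_of_gt hi)
  rw [htop, mul_one] at bound
  refine bound.trans (Real.sqrt_le_sqrt (sub_le_sub_right ?_ 1))
  exact le_one_add_sub_one_mul_mul_div (by exact_mod_cast hn) (one_le_pow₀ (by linarith))
end

section
/- Let δ' ≥ 0 and let A ∈ ℝ^{n×n} be a symmetric matrix with all entries positive such that A_{sj}/A_{tj} ≤ 1+δ' for all indices s, t, j. Let v ∈ ℝⁿ be an entrywise-positive eigenvector of A associated with its largest eigenvalue, normalized so that ‖v‖₂ = 1. Then min_i vᵢ ≥ 1/sqrt(1 + (n−1)(1+δ')²) and max_i vᵢ ≤ 1/sqrt(1 + (n−1)(1+δ')^{−2}). -/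
open Matrix Finset

/-!
Two entries of `A *ᵥ v` with `v ≥ 0` differ by at most the factor `c` by which two entries in the
same column of `A` differ. An eigenvector `v` for a positive eigenvalue is proportional to `A *ᵥ v`,
so any two of its entries also differ by at most the factor `c`. Comparing every entry with `v i` in
`∑ j, v j ^ 2 = 1` bounds `v i` from both sides.
-/

section Eigenvector

lemma mulVec_apply_le_mul_of_row_le {m n R : Type*} [Fintype n] [Semiring R] [PartialOrder R]
    [IsOrderedRing R] {A : Matrix m n R} {v : n → R} {c : R} {s t : m}
    (hrow : ∀ j, A s j ≤ c * A t j) (hv : ∀ j, 0 ≤ v j) :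
    (A *ᵥ v) s ≤ c * (A *ᵥ v) t :=
  calc A s ⬝ᵥ v ≤ (c • A t) ⬝ᵥ v := dotProduct_le_dotProduct_of_nonneg_right hrow hv
    _ = c * (A t ⬝ᵥ v) := smul_dotProduct c (A t) v

variable {ι R : Type*} [Fintype ι] [CommSemiring R] [LinearOrder R] [IsStrictOrderedRing R]
  {A : Matrix ι ι R} {v : ι → R} {lam c : R}

lemma eigenvector_apply_le_mul_of_row_le {s t : ι} (hrow : ∀ j, A s j ≤ c * A t j)
    (hv : ∀ j, 0 ≤ v j) (hlam : 0 < lam) (heig : A *ᵥ v = lam • v) : v s ≤ c * v t := by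
  refine le_of_mul_le_mul_left ?_ hlam
  calc lam * v s = (A *ᵥ v) s := (congrFun heig s).symm
    _ ≤ c * (A *ᵥ v) t := mulVec_apply_le_mul_of_row_le hrow hv
    _ = c * (lam * v t) := by rw [heig, Pi.smul_apply, smul_eq_mul]
    _ = lam * (c * v t) := mul_left_comm c lam (v t)

lemma eigenvalue_pos_of_nonneg_of_diag_pos (hA : ∀ i j, 0 ≤ A i j) (hdiag : ∀ i, 0 < A i i)
    (hv : ∀ j, 0 ≤ v j) (hv0 : v ≠ 0) (heig : A *ᵥ v = lam • v) : 0 < lam := by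
  obtain ⟨i, hi⟩ : ∃ i, v i ≠ 0 := Function.ne_iff.1 hv0
  have hvi : 0 < v i := (hv i).lt_of_ne' hi
  have hAv : 0 < (A *ᵥ v) i :=
    sum_pos' (fun j _ ↦ mul_nonneg (hA i j) (hv j)) ⟨i, mem_univ i, mul_pos (hdiag i) hvi⟩
  rw [heig] at hAv
  exact pos_of_mul_pos_left hAv hvi.le

end Eigenvector

section SumBounds

variable {ι R : Type*} [Fintype ι] [Ring R] [PartialOrder R] [IsOrderedRing R]
  {f : ι → R} {b : R} {i : ι}

lemma card_sub_one_nonneg (i : ι) : 0 ≤ (Fintype.card ι : R) - 1 := by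
  have hcard : 1 ≤ Fintype.card ι := Fintype.card_pos_iff.2 ⟨i⟩
  exact sub_nonneg.2 (Nat.cast_one.symm.trans_le (Nat.mono_cast hcard))

lemma sum_le_add_card_sub_one_mul (hf : ∀ j ≠ i, f j ≤ b) :
    ∑ j, f j ≤ f i + ((Fintype.card ι : R) - 1) * b := by
  classical
  calc ∑ j, f j = f i + ∑ j ∈ univ.erase i, f j := (add_sum_erase _ f (mem_univ i)).symm
    _ ≤ f i + #(univ.erase i) • b := by
      gcongr
      exact sum_le_card_nsmul _ _ _ fun j hj ↦ hf j (ne_of_mem_erase hj)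
    _ = f i + ((Fintype.card ι : R) - 1) * b := by
      rw [nsmul_eq_mul, cast_card_erase_of_mem (mem_univ i), card_univ]

lemma add_card_sub_one_mul_le_sum (hf : ∀ j ≠ i, b ≤ f j) :
    f i + ((Fintype.card ι : R) - 1) * b ≤ ∑ j, f j := by
  have hneg := sum_le_add_card_sub_one_mul (f := -f) fun j hj ↦ neg_le_neg (hf j hj)
  simpa only [Pi.neg_apply, sum_neg_distrib, mul_neg, ← neg_add, neg_le_neg_iff] using hneg

end SumBounds

section UnitVector

variable {ι : Type*} [Fintype ι] {v : ι → ℝ} {c : ℝ} {i : ι}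

lemma one_div_sqrt_le_of_sum_sq_eq_one (hv : ∀ j, 0 ≤ v j) (hnorm : ∑ j, v j ^ 2 = 1)
    (hle : ∀ j ≠ i, v j ≤ c * v i) :
    1 / √(1 + ((Fintype.card ι : ℝ) - 1) * c ^ 2) ≤ v i := by
  set D := 1 + ((Fintype.card ι : ℝ) - 1) * c ^ 2
  have hDpos : 0 < D := by
    have := card_sub_one_nonneg (R := ℝ) i
    positivity
  have hsum : 1 ≤ v i ^ 2 * D :=
    calc 1 = ∑ j, v j ^ 2 := hnorm.symm
      _ ≤ v i ^ 2 + ((Fintype.card ι : ℝ) - 1) * (c * v i) ^ 2 :=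
        sum_le_add_card_sub_one_mul fun j hj ↦ pow_le_pow_left₀ (hv j) (hle j hj) 2
      _ = v i ^ 2 * D := by ring
  rw [one_div, ← Real.sqrt_inv]
  exact Real.sqrt_le_iff.2 ⟨hv i, (inv_le_iff_one_le_mul₀ hDpos).2 hsum⟩

lemma le_one_div_sqrt_of_sum_sq_eq_one (hv : ∀ j, 0 ≤ v j) (hnorm : ∑ j, v j ^ 2 = 1)
    (hle : ∀ j ≠ i, v i ≤ c * v j) :
    v i ≤ 1 / √(1 + ((Fintype.card ι : ℝ) - 1) / c ^ 2) := by
  set D := 1 + ((Fintype.card ι : ℝ) - 1) / c ^ 2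
  have hDpos : 0 < D := by
    have := card_sub_one_nonneg (R := ℝ) i
    positivity
  have hentry (j : ι) (hj : j ≠ i) : v i ^ 2 / c ^ 2 ≤ v j ^ 2 := by
    refine div_le_of_le_mul₀ (sq_nonneg c) (sq_nonneg _) ?_
    rw [← mul_pow, mul_comm]
    exact pow_le_pow_left₀ (hv i) (hle j hj) 2
  have hsum : v i ^ 2 * D ≤ 1 :=
    calc v i ^ 2 * D = v i ^ 2 + ((Fintype.card ι : ℝ) - 1) * (v i ^ 2 / c ^ 2) := by ring
      _ ≤ ∑ j, v j ^ 2 := add_card_sub_one_mul_le_sum hentry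
      _ = 1 := hnorm
  rw [one_div, ← Real.sqrt_inv, ← one_div]
  exact Real.le_sqrt_of_sq_le ((le_div_iff₀ hDpos).2 hsum)

end UnitVector

theorem perron_vector_entry_bounds_general {ι : Type*} [Fintype ι] {A : Matrix ι ι ℝ}
    {v : ι → ℝ} {lam c : ℝ} (hrow : ∀ s t j, A s j ≤ c * A t j) (hv : ∀ i, 0 ≤ v i)
    (hnorm : ∑ i, v i ^ 2 = 1) (hlam : 0 < lam) (heig : A *ᵥ v = lam • v) :
    (∀ i, 1 / √(1 + ((Fintype.card ι : ℝ) - 1) * c ^ 2) ≤ v i) ∧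
    (∀ i, v i ≤ 1 / √(1 + ((Fintype.card ι : ℝ) - 1) / c ^ 2)) := by
  have hle (s t : ι) : v s ≤ c * v t :=
    eigenvector_apply_le_mul_of_row_le (hrow s t) hv hlam heig
  exact ⟨fun i ↦ one_div_sqrt_le_of_sum_sq_eq_one hv hnorm fun j _ ↦ hle j i,
    fun i ↦ le_one_div_sqrt_of_sum_sq_eq_one hv hnorm fun j _ ↦ hle i j⟩

/-- paper's Lemma A.8.  Let `A` be a symmetric matrix with all entries
positive whose same-column entry ratios are at most `1 + δ'`, and let `v` be an
entrywise-positive unit (in `ℓ²`) eigenvector of `A` associated with its largest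
eigenvalue.  Then every entry of `v` is at least `1/sqrt(1 + (n−1)(1+δ')²)` and at most
`1/sqrt(1 + (n−1)/(1+δ')²)`. -/
theorem perron_vector_entry_bounds {n : ℕ} (δ' : ℝ) (hδ' : 0 ≤ δ')
    (A : Matrix (Fin n) (Fin n) ℝ)
    (hsym : A.IsSymm)
    (hpos : ∀ i j, 0 < A i j)
    (hratio : ∀ s t j, A s j / A t j ≤ 1 + δ')
    (v : Fin n → ℝ) (hvpos : ∀ i, 0 < v i)
    (hnorm : ∑ i, (v i) ^ 2 = 1)
    (lam : ℝ) (heig : A.mulVec v = lam • v)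
    (hmax : ∀ (μ : ℝ) (w : Fin n → ℝ), w ≠ 0 → A.mulVec w = μ • w → μ ≤ lam) :
    (∀ i, 1 / Real.sqrt (1 + ((n : ℝ) - 1) * (1 + δ') ^ 2) ≤ v i) ∧
    (∀ i, v i ≤ 1 / Real.sqrt (1 + ((n : ℝ) - 1) / (1 + δ') ^ 2)) := by
  have hv (i : Fin n) : 0 ≤ v i := (hvpos i).le
  have hv0 : v ≠ 0 := by rintro rfl; simp at hnorm
  have hlam : 0 < lam :=
    eigenvalue_pos_of_nonneg_of_diag_pos (fun i j ↦ (hpos i j).le) (fun i ↦ hpos i i) hv hv0 heig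
  simpa only [Fintype.card_fin] using
    perron_vector_entry_bounds_general (fun s t j ↦ (div_le_iff₀ (hpos t j)).1 (hratio s t j))
      hv hnorm hlam heig
end
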